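/- arXiv:2301.06317 — 3 statements merged into one kernel-verified Lean document; each statement's English description precedes it below -/
import Mathlib

section
/- Let p ∈ ℂ be not a nonpositive integer and let m ≥ 0 and n ≥ 0 be integers. Then ∑_{k=1}^∞ (-1)^n·H_{k−1}/(k·(p+n+k)^(m+1)·C(n+k,k)) = (1/2)·∑_{k=0}^n (-1)^k·C(n,k)·(H_n² + H_n^{(2)} − H_{n−k}² − H_{n−k}^{(2)})/(p+k)^(m+1) + ((-1)^m/(2·m!))·(D_2 − 2·H_n·D_1), where for a = 1,2, D_a is the a-th complex derivative at x = n of the function x ↦ (the m-th complex derivative at s = p of s ↦ Γ(x+1)Γ(s)/Γ(x+s+1)). -/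
/-!
The starting point is the partial fraction expansion of the beta function,
`Γ(x+1)Γ(s)/Γ(x+s+1) = ∑_k c_k(x)/(s+k)` with `c_k(x) = (-1)^k C(x,k)`, valid for `Re x > -1/2` and
every `s` that is not a nonpositive integer (`tsum_binCoef_eq`). For `Re s > 0` it comes from
integrating the binomial series of `(1-t)^x` against `t^(s-1)` over `[0,1]`
(`hasSum_beta_of_re_pos`); the identity theorem extends it to the other `s`.

The bound `c_k(x) = O(k^(-1/2))`, uniform for bounded `x` with `Re x > -1/2` (`norm_binCoef_le`),
makes the series and its `s`-derivatives converge locally uniformly, so both the `m`-fold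
derivative in `s` and the derivatives in `x` may be taken term by term
(`hasSum_iteratedDeriv_iteratedDeriv_beta`).

What remains are the first two derivatives of the polynomials `c_k` at `x = n`. For `k ≤ n` they are
`c_k(n)` times polynomials in harmonic numbers (`binCoef_derivs_of_le`), so in `D₂ - 2 H_n D₁` these
terms cancel the finite sum. For `k = n + 1 + i` the polynomial `c_k` has a simple zero at `n` and
`c_k'' = 2 (H_n - H_i) c_k'` there (`binCoef_derivs_of_gt`), so `c_k'' - 2 H_n c_k' = -2 H_i c_k'`,
which produces the infinite series.
-/

/-- The harmonic number `H_n = ∑_{k=1}^n 1/k` (as a complex number). -/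
noncomputable def Hc (n : ℕ) : ℂ := ∑ i ∈ Finset.range n, (1 : ℂ) / (i + 1)

/-- The generalized harmonic number `H_n^{(2)} = ∑_{k=1}^n 1/k²` (as a complex number). -/
noncomputable def H2c (n : ℕ) : ℂ := ∑ i ∈ Finset.range n, (1 : ℂ) / (i + 1) ^ 2

open Filter Topology Set

/-! ### The coefficients `(-1)^k C(x,k)` -/

/-- The signed generalized binomial coefficient `(-1)^k C(x,k)`, as the product
`∏_{j<k} (j - x)/(j + 1)`, for complex `x`. -/
noncomputable def binCoef (k : ℕ) (x : ℂ) : ℂ := ∏ j ∈ Finset.range k, ((j : ℂ) - x) / (j + 1)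

lemma binCoef_zero (x : ℂ) : binCoef 0 x = 1 := by simp [binCoef]

lemma binCoef_succ (k : ℕ) (x : ℂ) :
    binCoef (k + 1) x = binCoef k x * (((k : ℂ) - x) / (k + 1)) :=
  Finset.prod_range_succ _ _

lemma differentiable_binCoef (k : ℕ) : Differentiable ℂ (binCoef k) := by
  unfold binCoef
  fun_prop

lemma binCoef_eq_choose (k : ℕ) (x : ℂ) : binCoef k x = (-1) ^ k * Ring.choose x k := by
  induction k with
  | zero => simp [binCoef_zero]
  | succ k ih =>
    have h0 : (k : ℂ) + 1 ≠ 0 := Nat.cast_add_one_ne_zero k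
    have hf : (k.factorial : ℂ) ≠ 0 := Nat.cast_ne_zero.2 k.factorial_ne_zero
    have h1 := Ring.descPochhammer_eq_factorial_smul_choose x (k + 1)
    have h2 := Ring.descPochhammer_eq_factorial_smul_choose x k
    rw [descPochhammer_succ_right, Polynomial.smeval_mul, h2] at h1
    simp [Nat.factorial_succ, Polynomial.smeval_sub, Polynomial.smeval_natCast] at h1
    rw [binCoef_succ, ih]
    have h3 : Ring.choose x k * (x - k) = (k + 1) * Ring.choose x (k + 1) := by
      apply mul_left_cancel₀ hf
      linear_combination h1
    field_simp
    rw [pow_succ]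
    linear_combination (-(-1) ^ k) * h3

/-- `(-1)^k C(x,k) = O(k^(-1/2))`, with a constant that depends only on a bound for `‖x + 1‖`. By
induction, `‖c_k‖² (k+1) ≤ exp (2M ∑_{j<k} 1/(j+1)²)`, since with `q = k + 1` each step multiplies
the left side by at most `(1 + 1/q)(1 - 1/q + M/q²) ≤ 1 + 2M/q²`. -/
lemma norm_binCoef_le {M : ℝ} {x : ℂ} (hx : -1 / 2 < x.re) (hM : ‖x + 1‖ ^ 2 ≤ M) (k : ℕ) :
    ‖binCoef k x‖ ≤ Real.exp (M * ∑' j : ℕ, 1 / ((j : ℝ) + 1) ^ 2) / √((k : ℝ) + 1) := by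
  have hM0 : 0 ≤ M := (sq_nonneg _).trans hM
  have hsum : Summable fun j : ℕ => 1 / ((j : ℝ) + 1) ^ 2 := by
    have := (summable_nat_add_iff 1).2 (Real.summable_one_div_nat_pow.2 (one_lt_two))
    simpa using this
  have key : ∀ k : ℕ, ‖binCoef k x‖ ^ 2 * ((k : ℝ) + 1) ≤
      Real.exp (2 * M * ∑ j ∈ Finset.range k, 1 / ((j : ℝ) + 1) ^ 2) := by
    intro k
    induction k with
    | zero => simp [binCoef_zero]
    | succ k ih =>
      have hq : (0 : ℝ) < (k : ℝ) + 1 := by positivity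
      rw [Finset.sum_range_succ, mul_add (2 * M), Real.exp_add, binCoef_succ, norm_mul, mul_pow]
      have e1 : ‖((k : ℂ) - x) / (k + 1)‖ ^ 2 = ((k - x.re) ^ 2 + x.im ^ 2) / ((k : ℝ) + 1) ^ 2 := by
        rw [norm_div, div_pow, Complex.sq_norm, Complex.normSq_apply]
        have : ‖(k : ℂ) + 1‖ = (k : ℝ) + 1 := by
          have := Complex.norm_natCast (k + 1)
          push_cast at this
          exact this
        rw [this]
        simp
        ring
      have e2 : (x.re + 1) ^ 2 + x.im ^ 2 ≤ M := by
        rw [Complex.sq_norm, Complex.normSq_apply] at hM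
        simp at hM
        linarith
      have e3 : ‖((k : ℂ) - x) / (k + 1)‖ ^ 2 * (((k + 1 : ℕ) : ℝ) + 1)
          ≤ ((k : ℝ) + 1) * Real.exp (2 * M * (1 / ((k : ℝ) + 1) ^ 2)) := by
        have h4 := Real.add_one_le_exp (2 * M * (1 / ((k : ℝ) + 1) ^ 2))
        refine le_trans ?_ (mul_le_mul_of_nonneg_left h4 hq.le)
        rw [e1]
        -- the hypothesis `Re x > -1/2` provides the saving `- (k + 1)`
        have h5 : ((k : ℝ) - x.re) ^ 2 + x.im ^ 2 ≤ ((k : ℝ) + 1) ^ 2 - ((k : ℝ) + 1) + M := by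
          nlinarith
        rw [div_mul_eq_mul_div, div_le_iff₀ (by positivity)]
        have h6 : ((k : ℝ) + 1) * (2 * M * (1 / ((k : ℝ) + 1) ^ 2) + 1) * ((k : ℝ) + 1) ^ 2
          = ((k : ℝ) + 1) * (2 * M) + ((k : ℝ) + 1) ^ 3 := by
          field_simp
        rw [h6]
        push_cast
        have hk : (0 : ℝ) ≤ k := k.cast_nonneg
        have := mul_le_mul_of_nonneg_right h5 (by positivity : (0 : ℝ) ≤ (k : ℝ) + 1 + 1)
        nlinarith [mul_nonneg hk hM0]
      calc _ = ‖binCoef k x‖ ^ 2 * (‖((k : ℂ) - x) / (k + 1)‖ ^ 2 * (((k + 1 : ℕ) : ℝ) + 1)) := by ring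
        _ ≤ ‖binCoef k x‖ ^ 2 * (((k : ℝ) + 1) * Real.exp (2 * M * (1 / ((k : ℝ) + 1) ^ 2))) := by
          gcongr
        _ = (‖binCoef k x‖ ^ 2 * ((k : ℝ) + 1)) * Real.exp (2 * M * (1 / ((k : ℝ) + 1) ^ 2)) := by ring
        _ ≤ _ := by gcongr
  have hk : (0 : ℝ) < (k : ℝ) + 1 := by positivity
  rw [le_div_iff₀ (Real.sqrt_pos.2 hk)]
  refine le_of_sq_le_sq ?_ (Real.exp_pos _).le
  rw [mul_pow, Real.sq_sqrt hk.le, ← Real.exp_nat_mul]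
  refine (key k).trans (Real.exp_le_exp.2 ?_)
  have := hsum.sum_le_tsum (Finset.range k) (fun _ _ => by positivity)
  push_cast
  rw [mul_assoc]
  gcongr

/-- Away from the poles, `‖s + k‖` is bounded below by a multiple of `k + 1`, uniformly in `k` and
locally uniformly in `s`. -/
lemma exists_le_norm_add {p : ℂ} (hp : ∀ j : ℕ, p ≠ -j) :
    ∃ δ > 0, ∀ s ∈ Metric.ball p δ, ∀ k : ℕ, δ * ((k : ℝ) + 1) ≤ ‖s + k‖ := by
  have hne : ∀ k : ℕ, p + k ≠ 0 := fun k h => hp k (eq_neg_of_add_eq_zero_left h)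
  -- `(k + 1) / (p + k)`, written as `(1 - p) / (p + k) + 1`, converges and so is bounded
  have hlim : Tendsto (fun k : ℕ => ‖(1 - p) * (1 / (p + k)) + 1‖) atTop (𝓝 ‖(1 - p) * 0 + 1‖) := by
    refine (((Tendsto.const_mul _ ?_)).add_const _).norm
    simp_rw [one_div]
    exact tendsto_inv₀_cobounded.comp
      ((tendsto_const_add_cobounded p).comp
        tendsto_natCast_atTop_cobounded)
  obtain ⟨K, hK⟩ := hlim.bddAbove_range
  have hK' : ∀ k : ℕ, (k : ℝ) + 1 ≤ (|K| + 1) * ‖p + k‖ := by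
    intro k
    have h1 : ‖(1 - p) * (1 / (p + k)) + 1‖ ≤ K := hK ⟨k, rfl⟩
    have h2 : (1 - p) * (1 / (p + k)) + 1 = (k + 1) / (p + k) := by
      field_simp [hne k]; ring
    have h3 : ‖(k : ℂ) + 1‖ = (k : ℝ) + 1 := by
      have := Complex.norm_natCast (k + 1)
      push_cast at this
      exact this
    rw [h2, norm_div, h3, div_le_iff₀ (norm_pos_iff.2 (hne k))] at h1
    nlinarith [le_abs_self K, norm_nonneg (p + k)]
  refine ⟨1 / (2 * (|K| + 1)), by positivity, fun s hs k => ?_⟩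
  rw [Metric.mem_ball, dist_eq_norm] at hs
  have h1 := hK' k
  have h2 : ‖p + k‖ ≤ ‖s + k‖ + ‖s - p‖ := by
    have := norm_sub_le (s + k) (s - p)
    rwa [show s + k - (s - p) = p + k by ring] at this
  set L := |K| + 1 with hL
  have hLp : 0 < L := by positivity
  rw [lt_div_iff₀ (by positivity)] at hs
  rw [div_mul_eq_mul_div, div_le_iff₀ (by positivity)]
  have hk : (0 : ℝ) ≤ k := k.cast_nonneg
  nlinarith

/-! ### Convergence of series -/

lemma summable_majorant (C : ℝ) : Summable fun k : ℕ => C / (√((k : ℝ) + 1) * ((k : ℝ) + 1)) := by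
  have h := (summable_nat_add_iff 1).2 (Real.summable_one_div_nat_rpow.2 (by norm_num : (1 : ℝ) < 3 / 2))
  refine (h.mul_left C).congr fun k => ?_
  have hk : (0 : ℝ) < (k : ℝ) + 1 := by positivity
  push_cast
  rw [show (3 / 2 : ℝ) = 1 / 2 + 1 by norm_num, Real.rpow_add hk, Real.rpow_one, Real.sqrt_eq_rpow]
  ring

/-- Termwise differentiation, to any order, of a locally uniformly convergent series of holomorphic
functions (Weierstrass). -/
lemma hasSum_iteratedDeriv {F : ℕ → ℂ → ℂ} {U : Set ℂ} (hU : IsOpen U)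
    (hF : ∀ i, DifferentiableOn ℂ (F i) U) {f : ℂ → ℂ}
    (hf : TendstoLocallyUniformlyOn (fun (S : Finset ℕ) z => ∑ i ∈ S, F i z) f atTop U)
    (m : ℕ) {z : ℂ} (hz : z ∈ U) :
    HasSum (fun i => iteratedDeriv m (F i) z) (iteratedDeriv m f z) := by
  induction m generalizing F f with
  | zero => simpa [HasSum] using hf.tendsto_at hz
  | succ m ih =>
    simp_rw [iteratedDeriv_succ']
    refine ih (fun i => (hF i).deriv hU) ?_
    refine (hf.deriv (Eventually.of_forall fun S => DifferentiableOn.fun_sum fun i _ => hF i)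
      hU).congr fun S w hw => ?_
    exact deriv_fun_sum fun i _ => (hF i).differentiableAt (hU.mem_nhds hw)

/-- The binomial series of `(1 - t)^x`. -/
lemma hasSum_binCoef_mul_pow (x : ℂ) {t : ℝ} (h0 : 0 < t) (h1 : t < 1) :
    HasSum (fun k : ℕ => binCoef k x * (t : ℂ) ^ k) ((1 - (t : ℂ)) ^ x) := by
  have h := (Complex.one_add_cpow_hasFPowerSeriesOnBall_zero (a := x)).hasSum (y := -(t : ℂ))
    (by simp; simpa [enorm_eq_nnnorm, ← NNReal.coe_lt_coe, abs_of_pos h0] using h1)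
  simp only [binomialSeries_apply] at h
  rw [zero_add, ← sub_eq_add_neg] at h
  refine h.congr_fun fun k => ?_
  simp [binCoef_eq_choose]
  ring

/-! ### Partial fractions of the beta function -/

lemma re_add_one_pos {x : ℂ} (hx : -1 / 2 < x.re) : 0 < (x + 1).re := by
  simp; linarith

lemma ne_neg_natCast_of_re_pos {s : ℂ} (hs : 0 < s.re) (j : ℕ) : s ≠ -j := by
  rintro rfl
  simp at hs
  linarith [(j.cast_nonneg : (0 : ℝ) ≤ j)]

/-- On `Re s > 0` the partial fraction expansion follows by integrating the binomial series of
`(1 - t)^x` against `t^(s-1)` over `[0,1]`; the exchange is justified by absolute convergence. -/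
lemma hasSum_beta_of_re_pos {x s : ℂ} (hx : -1 / 2 < x.re) (hs : 0 < s.re) :
    HasSum (fun k : ℕ => binCoef k x / (s + k))
      (Complex.Gamma (x + 1) * Complex.Gamma s / Complex.Gamma (x + s + 1)) := by
  have hre : ∀ k : ℕ, 0 < (s + k).re := fun k => by
    simp; positivity
  have hx1 := re_add_one_pos hx
  have hB : Complex.Gamma (x + 1) * Complex.Gamma s / Complex.Gamma (x + s + 1) =
      Complex.betaIntegral s (x + 1) := by
    have h := Complex.Gamma_mul_Gamma_eq_betaIntegral hs hx1
    have h0 : Complex.Gamma (x + s + 1) ≠ 0 := by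
      apply Complex.Gamma_ne_zero
      apply ne_neg_natCast_of_re_pos
      simp at hx1 ⊢; linarith
    rw [div_eq_iff h0, mul_comm, h, show s + (x + 1) = x + s + 1 by ring, mul_comm]
  rw [hB, Complex.betaIntegral, intervalIntegral.integral_of_le zero_le_one]
  set μ := MeasureTheory.volume.restrict (Ioc (0 : ℝ) 1) with hμ
  have hpow : ∀ k : ℕ, ∫ t : ℝ in Ioc 0 1, binCoef k x * (t : ℂ) ^ (s + k - 1) =
      binCoef k x / (s + k) := by
    intro k
    rw [MeasureTheory.integral_const_mul, ← intervalIntegral.integral_of_le zero_le_one,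
      integral_cpow (Or.inl (by have := hre k; simp at this ⊢; linarith))]
    have h0 : s + k ≠ 0 := fun h => by have := hre k; simp [h] at this
    simp [Complex.zero_cpow h0, div_eq_mul_inv]
  have hint : ∀ k : ℕ, MeasureTheory.Integrable
      (fun t : ℝ => binCoef k x * (t : ℂ) ^ (s + k - 1)) μ := by
    intro k
    refine MeasureTheory.Integrable.const_mul ?_ _
    have := intervalIntegral.intervalIntegrable_cpow' (a := 0) (b := 1) (r := s + k - 1)
      (by have := hre k; simp at this ⊢; linarith)
    rwa [intervalIntegrable_iff_integrableOn_Ioc_of_le zero_le_one] at this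
  have hnorm : ∀ k : ℕ, ∫ t, ‖binCoef k x * (t : ℂ) ^ (s + k - 1)‖ ∂μ =
      ‖binCoef k x‖ / (s.re + k) := by
    intro k
    have e : ∫ t, ‖binCoef k x * (t : ℂ) ^ (s + k - 1)‖ ∂μ =
        ∫ t in Ioc (0 : ℝ) 1, ‖binCoef k x‖ * t ^ (s.re + k - 1) := by
      refine MeasureTheory.setIntegral_congr_fun measurableSet_Ioc fun t ht => ?_
      simp [Complex.norm_cpow_eq_rpow_re_of_pos ht.1]
    have hk : 0 < s.re + k := by simpa using hre k
    rw [e, MeasureTheory.integral_const_mul, ← intervalIntegral.integral_of_le zero_le_one,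
      integral_rpow (Or.inl (by linarith))]
    simp [Real.zero_rpow hk.ne', div_eq_mul_inv]
  obtain ⟨δ, hδ, hδ'⟩ := exists_le_norm_add (p := (s.re : ℂ))
    (ne_neg_natCast_of_re_pos (by simpa using hs))
  have hsum : Summable fun k : ℕ => ∫ t, ‖binCoef k x * (t : ℂ) ^ (s + k - 1)‖ ∂μ := by
    simp_rw [hnorm]
    refine Summable.of_nonneg_of_le (fun k => ?_) (fun k => ?_)
      (summable_majorant (Real.exp (‖x + 1‖ ^ 2 * ∑' j : ℕ, 1 / ((j : ℝ) + 1) ^ 2) / δ))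
    · have : 0 < s.re + k := by simpa using hre k
      positivity
    · have h1 := norm_binCoef_le hx le_rfl k
      have h2 := hδ' _ (Metric.mem_ball_self hδ) k
      have hk : 0 < s.re + k := by simpa using hre k
      rw [← Complex.ofReal_natCast, ← Complex.ofReal_add, Complex.norm_of_nonneg hk.le] at h2
      calc _ ≤ (Real.exp (‖x + 1‖ ^ 2 * ∑' j : ℕ, 1 / ((j : ℝ) + 1) ^ 2) / √((k : ℝ) + 1)) /
            (δ * ((k : ℝ) + 1)) := by gcongr
        _ = _ := by field_simp
  have H := MeasureTheory.hasSum_integral_of_summable_integral_norm hint hsum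
  simp_rw [hμ, hpow] at H
  suffices h : ∫ t : ℝ in Ioc 0 1, (t : ℂ) ^ (s - 1) * (1 - (t : ℂ)) ^ (x + 1 - 1) =
      ∫ t : ℝ in Ioc 0 1, ∑' k : ℕ, binCoef k x * (t : ℂ) ^ (s + k - 1) by
    rw [h]
    exact H
  rw [MeasureTheory.integral_Ioc_eq_integral_Ioo, MeasureTheory.integral_Ioc_eq_integral_Ioo]
  refine MeasureTheory.setIntegral_congr_fun measurableSet_Ioo fun t ht => ?_
  have ht0 : (t : ℂ) ≠ 0 := by exact_mod_cast ht.1.ne'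
  have h := (hasSum_binCoef_mul_pow x ht.1 ht.2).mul_left ((t : ℂ) ^ (s - 1))
  simp only [add_sub_cancel_right]
  rw [← h.tsum_eq]
  refine tsum_congr fun k => ?_
  rw [show s + k - 1 = (s - 1) + k by ring, Complex.cpow_add _ _ ht0, Complex.cpow_natCast]
  ring

/-- The complex plane without the poles `0, -1, -2, …` of `Γ`. -/
def gammaDomain : Set ℂ := {s | ∀ j : ℕ, s ≠ -j}

lemma isOpen_gammaDomain : IsOpen gammaDomain := by
  refine Metric.isOpen_iff.2 fun p hp => ?_
  obtain ⟨δ, hδ, h⟩ := exists_le_norm_add hp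
  refine ⟨δ, hδ, fun s hs j hj => ?_⟩
  have h1 := h s hs j
  rw [hj] at h1
  simp at h1
  have : 0 < δ * ((j : ℝ) + 1) := by positivity
  linarith

lemma isPreconnected_gammaDomain : IsPreconnected gammaDomain := by
  have h : gammaDomain = (range fun j : ℕ => -(j : ℂ))ᶜ := by
    ext s
    simp [gammaDomain, eq_comm]
  rw [h]
  refine ((countable_range _).isConnected_compl_of_one_lt_rank ?_).isPreconnected
  simp [Complex.rank_real_complex]

lemma tendstoLocallyUniformlyOn_tsum_binCoef {x : ℂ} (hx : -1 / 2 < x.re) :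
    TendstoLocallyUniformlyOn (fun (S : Finset ℕ) s => ∑ k ∈ S, binCoef k x / (s + k))
      (fun s => ∑' k : ℕ, binCoef k x / (s + k)) atTop gammaDomain := by
  refine tendstoLocallyUniformlyOn_of_forall_exists_nhds fun p hp => ?_
  obtain ⟨δ, hδ, h⟩ := exists_le_norm_add hp
  refine ⟨Metric.ball p δ, mem_nhdsWithin_of_mem_nhds (Metric.ball_mem_nhds p hδ), ?_⟩
  refine tendstoUniformlyOn_tsum
    (summable_majorant (Real.exp (‖x + 1‖ ^ 2 * ∑' j : ℕ, 1 / ((j : ℝ) + 1) ^ 2) / δ))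
    fun k s hs => ?_
  have h1 := norm_binCoef_le hx le_rfl k
  have h2 := h s hs k
  rw [norm_div]
  calc _ ≤ (Real.exp (‖x + 1‖ ^ 2 * ∑' j : ℕ, 1 / ((j : ℝ) + 1) ^ 2) / √((k : ℝ) + 1)) /
            (δ * ((k : ℝ) + 1)) := by gcongr
    _ = _ := by field_simp

lemma differentiableOn_binCoef_div (x : ℂ) (k : ℕ) :
    DifferentiableOn ℂ (fun s => binCoef k x / (s + k)) gammaDomain := by
  intro s hs
  have : s + k ≠ 0 := fun h => hs k (eq_neg_of_add_eq_zero_left h)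
  have hd : DifferentiableAt ℂ (fun s : ℂ => s + k) s := by fun_prop
  exact ((differentiableAt_const (binCoef k x)).fun_div hd this).differentiableWithinAt

/-- The partial fraction expansion of the beta function in `s`, away from the poles, by analytic
continuation from `Re s > 0`. -/
lemma tsum_binCoef_eq {x s : ℂ} (hx : -1 / 2 < x.re) (hs : s ∈ gammaDomain) :
    ∑' k : ℕ, binCoef k x / (s + k) =
      Complex.Gamma (x + 1) * Complex.Gamma s / Complex.Gamma (x + s + 1) := by
  have hd : DifferentiableOn ℂ (fun s => ∑' k : ℕ, binCoef k x / (s + k)) gammaDomain :=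
    (tendstoLocallyUniformlyOn_tsum_binCoef hx).differentiableOn
      (Eventually.of_forall fun S => DifferentiableOn.fun_sum fun k _ =>
        differentiableOn_binCoef_div x k) isOpen_gammaDomain
  have hd' : DifferentiableOn ℂ
      (fun s => Complex.Gamma (x + 1) * Complex.Gamma s / Complex.Gamma (x + s + 1))
      gammaDomain := by
    intro s hs
    have h1 := Complex.differentiableAt_Gamma s hs
    have h2 : DifferentiableAt ℂ (fun s => (Complex.Gamma (x + s + 1))⁻¹) s :=
      (Complex.differentiable_one_div_Gamma _).comp s (by fun_prop)
    simp_rw [div_eq_mul_inv]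
    exact (((differentiableAt_const _).mul h1).mul h2).differentiableWithinAt
  have h1 : (1 : ℂ) ∈ gammaDomain := ne_neg_natCast_of_re_pos (by simp)
  refine (hd.analyticOnNhd isOpen_gammaDomain).eqOn_of_preconnected_of_eventuallyEq
    (hd'.analyticOnNhd isOpen_gammaDomain) isPreconnected_gammaDomain h1 ?_ hs
  filter_upwards [(isOpen_lt continuous_const Complex.continuous_re).mem_nhds
    (show (0 : ℝ) < (1 : ℂ).re by simp)] with s hs
  exact (hasSum_beta_of_re_pos hx hs).tsum_eq

lemma iteratedDeriv_const_div_add (m k : ℕ) (c p : ℂ) :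
    iteratedDeriv m (fun s : ℂ => c / (s + k)) p =
      c * ((-1) ^ m * m.factorial / (p + k) ^ (m + 1)) := by
  have h := congrFun (iter_deriv_inv_linear m (1 : ℂ) k) p
  simp_rw [div_eq_mul_inv]
  rw [iteratedDeriv_const_mul_field, iteratedDeriv_eq_iterate]
  simp only [one_mul, one_pow, mul_one] at h
  rw [h, show (-1 - m : ℤ) = -((m + 1 : ℕ) : ℤ) by push_cast; ring, zpow_neg, zpow_natCast]

lemma hasSum_iteratedDeriv_beta {x p : ℂ} (hx : -1 / 2 < x.re) (hp : p ∈ gammaDomain) (m : ℕ) :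
    HasSum (fun k : ℕ => binCoef k x * ((-1) ^ m * m.factorial / (p + k) ^ (m + 1)))
      (iteratedDeriv m (fun s : ℂ =>
        Complex.Gamma (x + 1) * Complex.Gamma s / Complex.Gamma (x + s + 1)) p) := by
  have h := hasSum_iteratedDeriv isOpen_gammaDomain (differentiableOn_binCoef_div x)
    ((tendstoLocallyUniformlyOn_tsum_binCoef hx).congr_right fun s hs => tsum_binCoef_eq hx hs)
    m hp
  simpa only [iteratedDeriv_const_div_add] using h

/-- The partial fraction expansion differentiated termwise, `m` times in `s` at `p` and then `a` times
in `x` at `n`. -/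
lemma hasSum_iteratedDeriv_iteratedDeriv_beta {p : ℂ} (hp : p ∈ gammaDomain) (m n a : ℕ) :
    HasSum (fun k : ℕ => iteratedDeriv a (binCoef k) n *
        ((-1) ^ m * m.factorial / (p + k) ^ (m + 1)))
      (iteratedDeriv a (fun x : ℂ => iteratedDeriv m (fun s : ℂ =>
        Complex.Gamma (x + 1) * Complex.Gamma s / Complex.Gamma (x + s + 1)) p) n) := by
  -- a neighbourhood of `n` on which `norm_binCoef_le` applies with one constant
  set M : ℝ := ((n : ℝ) + 2) ^ 2
  set U : Set ℂ := {x | -1 / 2 < x.re ∧ ‖x + 1‖ ^ 2 < M}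
  have hU : IsOpen U := (isOpen_lt continuous_const Complex.continuous_re).inter
    (isOpen_lt (by fun_prop : Continuous fun x : ℂ => ‖x + 1‖ ^ 2) continuous_const)
  have hn : (n : ℂ) ∈ U := by
    have h1 : ‖(n : ℂ) + 1‖ = (n : ℝ) + 1 := by
      have := Complex.norm_natCast (n + 1)
      push_cast at this
      exact this
    have h0 : (0 : ℝ) ≤ n := n.cast_nonneg
    refine ⟨?_, ?_⟩
    · simp; linarith
    · rw [h1]; simp only [M]; gcongr; norm_num
  obtain ⟨δ, hδ, h⟩ := exists_le_norm_add hp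
  have hd : ∀ k : ℕ, DifferentiableOn ℂ
      (fun x => binCoef k x * ((-1) ^ m * m.factorial / (p + k) ^ (m + 1))) U := fun k =>
    ((differentiable_binCoef k).mul_const _).differentiableOn
  have hunif := tendstoUniformlyOn_tsum (f := fun (k : ℕ) x =>
      binCoef k x * ((-1) ^ m * m.factorial / (p + k) ^ (m + 1))) (s := U)
    (summable_majorant (Real.exp (M * ∑' j : ℕ, 1 / ((j : ℝ) + 1) ^ 2) *
      m.factorial / δ ^ (m + 1)))
    (fun k x hx => by
      have h1 := norm_binCoef_le hx.1 hx.2.le k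
      have h2 := h p (Metric.mem_ball_self hδ) k
      have hk : 1 ≤ (k : ℝ) + 1 := by simp
      have h3 : (k : ℝ) + 1 ≤ ((k : ℝ) + 1) ^ (m + 1) := le_self_pow₀ hk (by omega)
      have h4 : δ ^ (m + 1) * ((k : ℝ) + 1) ≤ ‖p + k‖ ^ (m + 1) :=
        calc _ ≤ δ ^ (m + 1) * ((k : ℝ) + 1) ^ (m + 1) := by gcongr
          _ = (δ * ((k : ℝ) + 1)) ^ (m + 1) := (mul_pow _ _ _).symm
          _ ≤ _ := by gcongr
      have e : ‖((-1) ^ m * m.factorial / (p + k) ^ (m + 1) : ℂ)‖ =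
          m.factorial / ‖p + k‖ ^ (m + 1) := by simp
      rw [norm_mul, e]
      calc _ ≤ (Real.exp (M * ∑' j : ℕ, 1 / ((j : ℝ) + 1) ^ 2) / √((k : ℝ) + 1)) *
            (m.factorial / (δ ^ (m + 1) * ((k : ℝ) + 1))) := by gcongr
        _ = _ := by field_simp)
  have H := hasSum_iteratedDeriv hU hd
    (hunif.tendstoLocallyUniformlyOn.congr_right fun x hx =>
      (hasSum_iteratedDeriv_beta hx.1 hp m).tsum_eq) a hn
  refine H.congr_fun fun k => ?_
  simp_rw [mul_comm (binCoef k _)]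
  rw [iteratedDeriv_const_mul_field, mul_comm]

/-! ### Derivatives of the coefficients at a natural number -/

lemma deriv_binCoef_succ (k : ℕ) (x : ℂ) : deriv (binCoef (k + 1)) x =
    deriv (binCoef k) x * (((k : ℂ) - x) / (k + 1)) - binCoef k x / (k + 1) := by
  have h : HasDerivAt (fun x : ℂ => ((k : ℂ) - x) / (k + 1)) (-1 / (k + 1)) x :=
    ((hasDerivAt_id x).const_sub _).div_const _
  rw [funext (binCoef_succ k), ((differentiable_binCoef k x).hasDerivAt.fun_mul h).deriv]
  ring

lemma deriv_deriv_binCoef_succ (k : ℕ) (x : ℂ) : deriv (deriv (binCoef (k + 1))) x =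
    deriv (deriv (binCoef k)) x * (((k : ℂ) - x) / (k + 1)) -
      2 * deriv (binCoef k) x / (k + 1) := by
  have h : HasDerivAt (fun x : ℂ => ((k : ℂ) - x) / (k + 1)) (-1 / (k + 1)) x :=
    ((hasDerivAt_id x).const_sub _).div_const _
  have hd' : DifferentiableAt ℂ (deriv (binCoef k)) x :=
    ((differentiable_binCoef k).deriv) x
  rw [funext (deriv_binCoef_succ k), ((hd'.hasDerivAt.fun_mul h).fun_sub
    ((differentiable_binCoef k x).hasDerivAt.div_const _)).deriv]
  ring

lemma Hc_succ (n : ℕ) : Hc (n + 1) = Hc n + 1 / (n + 1) := Finset.sum_range_succ _ _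

lemma H2c_succ (n : ℕ) : H2c (n + 1) = H2c n + 1 / (n + 1) ^ 2 := Finset.sum_range_succ _ _

lemma binCoef_natCast (k n : ℕ) : binCoef k n = (-1) ^ k * (n.choose k : ℂ) := by
  rw [binCoef_eq_choose, Ring.choose_natCast]

/-- For `k ≤ n` the logarithmic derivative of `c_k` at `n` is `H_n - H_{n-k}`, and the derivative of
the logarithmic derivative is `-(H_n^{(2)} - H_{n-k}^{(2)})`. -/
lemma binCoef_derivs_of_le {k n : ℕ} (h : k ≤ n) :
    deriv (binCoef k) n = binCoef k n * (Hc n - Hc (n - k)) ∧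
    deriv (deriv (binCoef k)) n =
      binCoef k n * ((Hc n - Hc (n - k)) ^ 2 - (H2c n - H2c (n - k))) := by
  induction k with
  | zero =>
    have : binCoef 0 = fun _ => 1 := funext binCoef_zero
    simp [this]
  | succ k ih =>
    obtain ⟨r, rfl⟩ := Nat.exists_eq_add_of_le h
    obtain ⟨h1, h2⟩ := ih (by omega)
    rw [show k + 1 + r - k = r + 1 by omega] at h1 h2
    rw [show k + 1 + r - (k + 1) = r by omega, deriv_deriv_binCoef_succ, deriv_binCoef_succ, h1, h2,
      binCoef_succ, Hc_succ r, H2c_succ r]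
    have hk : (k : ℂ) + 1 ≠ 0 := Nat.cast_add_one_ne_zero k
    have hr : (r : ℂ) + 1 ≠ 0 := Nat.cast_add_one_ne_zero r
    have e : (k : ℂ) - ((k + 1 + r : ℕ) : ℂ) = -(r + 1) := by push_cast; ring
    rw [e]
    constructor
    · field_simp
      ring
    · field_simp
      ring

/-- For `k = i + n + 1`, `c_k` has a simple zero at `n`: the factor `j = n` of the product vanishes
there. -/
lemma binCoef_derivs_of_gt (n i : ℕ) :
    binCoef (i + (n + 1)) n = 0 ∧
    deriv (binCoef (i + (n + 1))) n =
      (-1) ^ (n + 1) / ((i + 1) * ((n + (i + 1)).choose (i + 1) : ℂ)) ∧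
    deriv (deriv (binCoef (i + (n + 1)))) n =
      2 * (Hc n - Hc i) * deriv (binCoef (i + (n + 1))) n := by
  induction i with
  | zero =>
    obtain ⟨h1, -⟩ := binCoef_derivs_of_le (le_refl n)
    have h0 : binCoef n n = (-1) ^ n := by simp [binCoef_natCast]
    have hH : Hc 0 = 0 := by simp [Hc]
    rw [zero_add, deriv_deriv_binCoef_succ, deriv_binCoef_succ, binCoef_succ, h1, h0, Nat.sub_self,
      hH]
    refine ⟨by simp, ?_, ?_⟩
    · simp [pow_succ]
      ring
    · simp
      ring
  | succ i ih =>
    obtain ⟨h0, h1, h2⟩ := ih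
    have hi : (i : ℂ) + 1 ≠ 0 := Nat.cast_add_one_ne_zero i
    have hi2 : (i : ℂ) + 1 + 1 ≠ 0 := by exact_mod_cast Nat.cast_add_one_ne_zero (R := ℂ) (i + 1)
    have hni : (i : ℂ) + (n + 1) + 1 ≠ 0 := by
      exact_mod_cast Nat.cast_add_one_ne_zero (R := ℂ) (i + (n + 1))
    have hc : ((n + (i + 1)).choose (i + 1) : ℂ) ≠ 0 :=
      Nat.cast_ne_zero.2 (Nat.choose_pos (by omega)).ne'
    have hc' : ((n + (i + 1 + 1)).choose (i + 1 + 1) : ℂ) ≠ 0 :=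
      Nat.cast_ne_zero.2 (Nat.choose_pos (by omega)).ne'
    have hch : ((i : ℂ) + (n + 1) + 1) * ((n + (i + 1)).choose (i + 1) : ℂ) =
        ((n + (i + 1 + 1)).choose (i + 1 + 1) : ℂ) * (i + 1 + 1) := by
      have := Nat.add_one_mul_choose_eq (n + (i + 1)) (i + 1)
      rw [show n + (i + 1 + 1) = n + (i + 1) + 1 by ring]
      rw [← Nat.cast_inj (R := ℂ)] at this
      push_cast at this
      linear_combination this
    have e : (((i + (n + 1) : ℕ) : ℂ) - n) = i + 1 := by push_cast; ring
    rw [show i + 1 + (n + 1) = i + (n + 1) + 1 by ring, deriv_deriv_binCoef_succ,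
      deriv_binCoef_succ, binCoef_succ, h2, h1, h0, e, Hc_succ i]
    refine ⟨by simp, ?_, ?_⟩
    · push_cast
      field_simp
      linear_combination (-1) ^ n * hch
    · push_cast
      field_simp
      ring

/-- For `p ∈ ℂ` not a nonpositive integer and integers `m, n ≥ 0`,
`∑_{k=1}^∞ (-1)^n·H_{k−1}/(k·(p+n+k)^(m+1)·C(n+k,k))
 = (1/2)·∑_{k=0}^n (-1)^k·C(n,k)·(H_n² + H_n^{(2)} − H_{n−k}² − H_{n−k}^{(2)})/(p+k)^(m+1)
   + ((-1)^m/(2·m!))·(D₂ − 2·H_n·D₁)`,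
where `D_a` is the `a`-th derivative at `x = n` of
`x ↦ (d^m/ds^m)[Γ(x+1)Γ(s)/Γ(x+s+1)]|_{s=p}`. -/
theorem sum_harmonic_inv_k_binom_eq (p : ℂ) (hp : ∀ j : ℕ, p ≠ -j) (m n : ℕ) :
    (∑' k : ℕ,
        (-1 : ℂ) ^ n * Hc k /
          ((k + 1 : ℂ) * (p + n + (k + 1)) ^ (m + 1) *
            (Nat.choose (n + (k + 1)) (k + 1) : ℂ))) =
      1 / 2 *
        (∑ k ∈ Finset.range (n + 1),
          (-1 : ℂ) ^ k * (Nat.choose n k : ℂ) *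
            (Hc n ^ 2 + H2c n - Hc (n - k) ^ 2 - H2c (n - k)) / (p + k) ^ (m + 1)) +
      (-1 : ℂ) ^ m / (2 * Nat.factorial m) *
        (iteratedDeriv 2
            (fun x : ℂ =>
              iteratedDeriv m
                (fun s : ℂ =>
                  Complex.Gamma (x + 1) * Complex.Gamma s / Complex.Gamma (x + s + 1))
                p)
            (n : ℂ) -
          2 * Hc n *
            iteratedDeriv 1
              (fun x : ℂ =>
                iteratedDeriv m
                  (fun s : ℂ =>
                    Complex.Gamma (x + 1) * Complex.Gamma s / Complex.Gamma (x + s + 1))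
                  p)
              (n : ℂ)) := by
  have h1 := hasSum_iteratedDeriv_iteratedDeriv_beta hp m n 1
  have h2 := hasSum_iteratedDeriv_iteratedDeriv_beta hp m n 2
  have h := (h2.sub (h1.mul_left (2 * Hc n))).mul_left ((-1 : ℂ) ^ m / (2 * Nat.factorial m))
  have hm : (m.factorial : ℂ) ≠ 0 := Nat.cast_ne_zero.2 m.factorial_ne_zero
  have hsq : ((-1 : ℂ) ^ m) * (-1) ^ m = 1 := by rw [← mul_pow]; simp
  have hsimp : ∀ k : ℕ, (-1 : ℂ) ^ m / (2 * Nat.factorial m) *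
      (iteratedDeriv 2 (binCoef k) n * ((-1) ^ m * m.factorial / (p + k) ^ (m + 1)) -
        2 * Hc n * (iteratedDeriv 1 (binCoef k) n *
          ((-1) ^ m * m.factorial / (p + k) ^ (m + 1)))) =
      1 / 2 * (deriv (deriv (binCoef k)) n - 2 * Hc n * deriv (binCoef k) n) /
        (p + k) ^ (m + 1) := by
    intro k
    have hpk : p + k ≠ 0 := fun h => hp k (eq_neg_of_add_eq_zero_left h)
    rw [iteratedDeriv_succ, iteratedDeriv_one]
    field_simp
    linear_combination (deriv (deriv (binCoef k)) n - 2 * Hc n * deriv (binCoef k) n) * hsq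
  simp_rw [hsimp] at h
  rw [← h.tsum_eq, ← h.summable.sum_add_tsum_nat_add (n + 1), ← add_assoc, Finset.mul_sum,
    ← Finset.sum_add_distrib, Finset.sum_eq_zero, zero_add]
  -- the terms with index above `n` give the infinite series
  · refine tsum_congr fun i => ?_
    obtain ⟨-, e1, e2⟩ := binCoef_derivs_of_gt n i
    have e : p + ((i + (n + 1) : ℕ) : ℂ) = p + n + (i + 1) := by push_cast; ring
    rw [e2, e1, e, pow_succ]
    field_simp
    ring
  -- the terms with index at most `n` cancel against the finite sum
  · intro k hk
    obtain ⟨e1, e2⟩ := binCoef_derivs_of_le (Nat.lt_succ_iff.1 (Finset.mem_range.1 hk))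
    rw [e2, e1, binCoef_natCast]
    ring
end

section
/- ∑_{k=1}^∞ (2H_{2k} − H_k)·C(2k,k)/((k+1)·4^(k+1)) = 1. -/
/-!
Write `b k = C(2k,k) / 4^k` and `a k = 2 H_{2k} - H_k`. Since `b (k+1) = b k (2k+1)/(2k+2)` and
`a (k+1) = a k + 2/(2k+1)`, the `k`-th term `a k * b k / (4 (k+1))` of the series is the difference
`G k - G (k+1)` with `G k = (a k + 2) b k / 2` (`G_sub_G_succ`). The series therefore sums to
`G 1 - lim G`, where `G 1 = 1`. The limit is `0` (`tendsto_G`), because `a k` grows only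
logarithmically while `b k ≤ 1 / √(2k)`.
-/

/-- The harmonic number `H_n = ∑_{k=1}^n 1/k`. -/
noncomputable def H (n : ℕ) : ℝ := ∑ i ∈ Finset.range n, (1 : ℝ) / (i + 1)

open Filter Topology

/-- The normalized central binomial coefficient `C(2k,k) / 4^k`. -/
noncomputable def b (k : ℕ) : ℝ := (Nat.centralBinom k : ℝ) / 4 ^ k

/-- The combination `2 H_{2k} - H_k`, equal to `2 ∑_{i=1}^k 1/(2i-1)`. -/
noncomputable def a (k : ℕ) : ℝ := 2 * H (2 * k) - H k

/-- The telescoping potential: consecutive differences of `G` are the terms of the series. -/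
noncomputable def G (k : ℕ) : ℝ := (a k + 2) * b k / 2

lemma b_pos (k : ℕ) : 0 < b k := by
  have := Nat.centralBinom_pos k
  unfold b
  positivity

lemma b_succ (k : ℕ) : b (k + 1) = b k * (2 * k + 1) / (2 * (k + 1)) := by
  have h : ((k : ℝ) + 1) * Nat.centralBinom (k + 1) = 2 * (2 * k + 1) * Nat.centralBinom k := by
    exact_mod_cast Nat.succ_mul_centralBinom_succ k
  unfold b
  rw [pow_succ]
  field_simp
  linarith

lemma a_succ (k : ℕ) : a (k + 1) = a k + 2 / (2 * k + 1) := by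
  unfold a H
  rw [show 2 * (k + 1) = 2 * k + 1 + 1 by ring]
  simp only [Finset.sum_range_succ]
  push_cast
  field_simp
  ring

lemma a_nonneg (k : ℕ) : 0 ≤ a k := by
  induction k with
  | zero => simp [a, H]
  | succ k ih => rw [a_succ]; positivity

lemma G_sub_G_succ (k : ℕ) : G k - G (k + 1) = a k * b k / (4 * (k + 1)) := by
  unfold G
  rw [a_succ, b_succ]
  field_simp
  ring

lemma G_one : G 1 = 1 := by
  norm_num [G, a, b, H, Finset.sum_range_succ, Nat.centralBinom, Nat.choose]

lemma b_sq_mul_le (k : ℕ) : b k ^ 2 * (2 * k + 1) ≤ 1 := by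
  induction k with
  | zero => simp [b]
  | succ k ih =>
    refine le_trans ?_ ih
    rw [b_succ]
    push_cast
    have h : (b k * (2 * k + 1) / (2 * ((k : ℝ) + 1))) ^ 2 * (2 * ((k : ℝ) + 1) + 1)
        = b k ^ 2 * (2 * k + 1) * ((2 * k + 1) * (2 * k + 3) / (2 * k + 2) ^ 2) := by
      field_simp
      ring
    rw [h]
    refine mul_le_of_le_one_right (by positivity) ?_
    rw [div_le_one (by positivity)]
    nlinarith

lemma b_le (k : ℕ) (hk : 0 < k) : b k ≤ 1 / √(2 * k) := by
  have hk' : (0 : ℝ) < k := by exact_mod_cast hk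
  rw [le_div_iff₀ (by positivity)]
  refine (sq_le_one_iff₀ (by have := b_pos k; positivity)).1 ?_
  rw [mul_pow, Real.sq_sqrt (by positivity)]
  nlinarith [b_sq_mul_le k, sq_nonneg (b k)]

lemma H_eq_harmonic (n : ℕ) : H n = (harmonic n : ℝ) := by
  simp [H, harmonic]

lemma a_le (k : ℕ) : a k ≤ 2 * (1 + Real.log (2 * k)) := by
  have h := harmonic_le_one_add_log (2 * k)
  rw [← H_eq_harmonic] at h
  push_cast at h
  have h0 : 0 ≤ H k := by unfold H; positivity
  unfold a
  linarith

lemma tendsto_G : Tendsto G atTop (𝓝 0) := by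
  have hlog : Tendsto (fun x : ℝ => Real.log x / √x) atTop (𝓝 0) := by
    simpa only [Real.sqrt_eq_rpow] using
      (isLittleO_log_rpow_atTop (r := 1 / 2) (by norm_num)).tendsto_div_nhds_zero
  have hinv : Tendsto (fun x : ℝ => 2 * (√x)⁻¹) atTop (𝓝 0) := by
    simpa using (tendsto_inv_atTop_zero.comp Real.tendsto_sqrt_atTop).const_mul 2
  have h2k : Tendsto (fun k : ℕ => (2 * k : ℝ)) atTop atTop :=
    tendsto_natCast_atTop_atTop.const_mul_atTop two_pos
  have hub := (hinv.add hlog).comp h2k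
  rw [add_zero] at hub
  refine tendsto_of_tendsto_of_tendsto_of_le_of_le' tendsto_const_nhds hub ?_ ?_
  · refine Eventually.of_forall fun k => ?_
    have := a_nonneg k
    have := b_pos k
    unfold G
    positivity
  · filter_upwards [eventually_gt_atTop 0] with k hk
    have h := mul_le_mul (add_le_add_left (a_le k) 2) (b_le k hk) (b_pos k).le
      (by linarith [a_nonneg k, a_le k])
    calc G k = (a k + 2) * b k / 2 := rfl
      _ ≤ (2 * (1 + Real.log (2 * k)) + 2) * (1 / √(2 * k)) / 2 := by linarith
      _ = 2 * (√(2 * k))⁻¹ + Real.log (2 * k) / √(2 * k) := by ring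

/-- `∑_{k=1}^∞ (2H_{2k} − H_k)·C(2k,k)/((k+1)·4^(k+1)) = 1`. -/
theorem sum_central_binom_eq_one :
    (∑' k : ℕ,
        (2 * H (2 * (k + 1)) - H (k + 1)) * (Nat.choose (2 * (k + 1)) (k + 1) : ℝ) /
          (((k + 1 : ℝ) + 1) * 4 ^ (k + 2))) = 1 := by
  have hterm : ∀ k : ℕ,
      (2 * H (2 * (k + 1)) - H (k + 1)) * (Nat.choose (2 * (k + 1)) (k + 1) : ℝ) /
          (((k + 1 : ℝ) + 1) * 4 ^ (k + 2)) = G (k + 1) - G (k + 1 + 1) := by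
    intro k
    rw [G_sub_G_succ, a, b, Nat.centralBinom]
    push_cast
    field_simp
    ring
  simp_rw [hterm]
  refine HasSum.tsum_eq ?_
  rw [hasSum_iff_tendsto_nat_of_nonneg]
  · have hsum : ∀ n : ℕ, ∑ i ∈ Finset.range n, (G (i + 1) - G (i + 1 + 1)) = 1 - G (n + 1) := by
      intro n
      rw [Finset.sum_range_sub' (fun i => G (i + 1)), zero_add, G_one]
    simp_rw [hsum]
    simpa using ((tendsto_add_atTop_iff_nat 1).2 tendsto_G).const_sub 1
  · intro k
    have := a_nonneg (k + 1)
    have := b_pos (k + 1)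
    rw [G_sub_G_succ]
    positivity
end

section
/- Let m ≥ 0 be an integer. Then ∑_{j=2}^∞ (ζ(m+j) − 1) = m + 1 − ∑_{k=1}^m ζ(k+1). -/
/-!
Goldbach's theorem (`m = 0`) comes from exchanging the order of summation in the nonnegative
double series `∑_{n, j} 1 / (n + 2) ^ (j + 2)`. Summing over `n` first gives `ζ(j + 2) - 1`;
summing the geometric series over `j` first gives `1 / ((n + 1) (n + 2))`, which telescopes to `1`.
The general case removes the first `m` terms of this convergent series.
-/

/-- The Riemann zeta function at integer arguments, `ζ(s) = ∑_{n=1}^∞ 1/n^s`. -/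
noncomputable def zeta (s : ℕ) : ℝ := ∑' n : ℕ, (1 : ℝ) / (n + 1) ^ s

lemma hasSum_zeta_sub_one (j : ℕ) :
    HasSum (fun n : ℕ => (1 : ℝ) / (n + 2) ^ (j + 2)) (zeta (j + 2) - 1) := by
  have hs : Summable (fun n : ℕ => (1 : ℝ) / (n + 1) ^ (j + 2)) := by
    have := (summable_nat_add_iff 1).2
      (Real.summable_one_div_nat_pow.2 (show 1 < j + 2 by omega))
    simpa using this
  have h := (hasSum_nat_add_iff' 1).2 hs.hasSum
  have e1 : (fun n : ℕ => (1 : ℝ) / (n + 2) ^ (j + 2)) =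
      fun n : ℕ => (1 : ℝ) / ((n + 1 : ℕ) + 1) ^ (j + 2) := by
    funext n
    push_cast
    ring
  rw [e1]
  simpa [zeta] using h

lemma hasSum_geometric_row (n : ℕ) :
    HasSum (fun j : ℕ => (1 : ℝ) / (n + 2) ^ (j + 2)) (1 / ((n + 1) * (n + 2))) := by
  have hn : (0 : ℝ) ≤ n := n.cast_nonneg
  have h := (hasSum_geometric_of_lt_one (r := 1 / ((n : ℝ) + 2)) (by positivity)
    (by rw [div_lt_one (by positivity)]; linarith)).mul_left (1 / ((n : ℝ) + 2) ^ 2)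
  have e1 : (fun j : ℕ => (1 : ℝ) / (n + 2) ^ (j + 2)) =
      fun j : ℕ => 1 / ((n : ℝ) + 2) ^ 2 * (1 / ((n : ℝ) + 2)) ^ j := by
    funext j
    rw [one_div_pow, pow_add]
    field_simp
  have e2 : (1 : ℝ) / ((n + 1) * (n + 2)) =
      1 / ((n : ℝ) + 2) ^ 2 * (1 - 1 / ((n : ℝ) + 2))⁻¹ := by
    have h1 : 1 - 1 / ((n : ℝ) + 2) = (n + 1) / (n + 2) := by
      field_simp
      ring
    rw [h1]
    field_simp
  rw [e1, e2]
  exact h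

lemma hasSum_telescoping :
    HasSum (fun n : ℕ => (1 : ℝ) / ((n + 1) * (n + 2))) 1 := by
  rw [hasSum_iff_tendsto_nat_of_nonneg (fun n => by positivity)]
  have h (N : ℕ) :
      ∑ n ∈ Finset.range N, (1 : ℝ) / ((n + 1) * (n + 2)) = 1 - 1 / ((N : ℝ) + 1) := by
    induction N with
    | zero => simp
    | succ N ih =>
      rw [Finset.sum_range_succ, ih]
      push_cast
      have : (N : ℝ) + 1 + 1 ≠ 0 := by positivity
      field_simp
      ring
  simp_rw [h]
  simpa using (tendsto_one_div_add_atTop_nhds_zero_nat (𝕜 := ℝ)).const_sub 1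

lemma hasSum_goldbach : HasSum (fun j : ℕ => zeta (j + 2) - 1) 1 := by
  let f : ℕ × ℕ → ℝ := fun p => 1 / ((p.1 : ℝ) + 2) ^ (p.2 + 2)
  have hf : Summable f := by
    rw [summable_prod_of_nonneg (fun p => by positivity)]
    refine ⟨fun n => (hasSum_geometric_row n).summable, ?_⟩
    exact hasSum_telescoping.summable.congr fun n =>
      (hasSum_geometric_row n).tsum_eq.symm
  have h1 : ∑' p, f p = 1 :=
    (hf.hasSum.prod_fiberwise hasSum_geometric_row).unique hasSum_telescoping
  have h2 : HasSum (f ∘ Prod.swap) 1 := by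
    rw [← h1]
    exact (Equiv.prodComm ℕ ℕ).hasSum_iff.2 hf.hasSum
  exact h2.prod_fiberwise hasSum_zeta_sub_one

/-- For an integer `m ≥ 0`, `∑_{j=2}^∞ (ζ(m+j) − 1) = m + 1 − ∑_{k=1}^m ζ(k+1)`. -/
theorem sum_zeta_sub_one (m : ℕ) :
    (∑' j : ℕ, (zeta (m + (j + 2)) - 1)) =
      (m : ℝ) + 1 - ∑ k ∈ Finset.Icc 1 m, zeta (k + 1) := by
  have h := ((hasSum_nat_add_iff' m).2 hasSum_goldbach).tsum_eq
  have e : ∑ k ∈ Finset.Icc 1 m, zeta (k + 1) = ∑ k ∈ Finset.range m, zeta (k + 2) := by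
    rw [Finset.range_eq_Ico, Finset.sum_Ico_add' (fun k => zeta (k + 1)) 0 m 1]
    rfl
  rw [e]
  simp only [Finset.sum_sub_distrib, Finset.sum_const, Finset.card_range, nsmul_eq_mul,
    mul_one] at h
  rw [show (m : ℝ) + 1 - ∑ k ∈ Finset.range m, zeta (k + 2)
    = 1 - (∑ k ∈ Finset.range m, zeta (k + 2) - m) by ring, ← h]
  refine tsum_congr fun j => ?_
  rw [show m + (j + 2) = j + m + 2 by ring]
end
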